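/- There do not exist an integer ℓ ≥ 2, a sign ε ∈ {1, −1}, and positive integers k, x, n such that simultaneously: L_{ℓ+ε} = k², F_ℓ is an odd prime, F_{ℓ−2ε} ≥ 2, gcd(k, F_{ℓ−2ε}) = 1, and F_{ℓ−2ε}·x² + k² = (F_ℓ)ⁿ. -/

import Mathlib

/-!
Everything reduces to the theorem of Cohn that `L_n` is a perfect square only for `n = 1, 3`.
Given this, `ℓ + ε ∈ {1, 3}` and `F_ℓ > 1` leave only `ℓ = 4`, `ε = -1`, where
`k = 2` and `F_{ℓ-2ε} = F_6 = 8` are not coprime.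

Cohn's theorem rests on `L_{m+2k} + (-1)^k L_m = L_{m+k} L_k`. For `n = 2m` it gives
`L_n = L_m² ± 2`, which is never a square. For odd `n ∉ {1, 3}` write `n = r + 2qt` with
`r ∈ {1, 3}`, `q = 2^a`, `a ≥ 1`, and `t` odd; the identity gives `L_n ≡ -L_r (mod L_q)`. Here `L_r`
is the square `1` or `4`, while `L_q ≡ 3 (mod 4)`, so `-L_r` has Jacobi symbol `-1` modulo `L_q`
and `L_n` cannot be a square.
-/

/-- The Lucas sequence: `L₀ = 2`, `L₁ = 1`, `L_{ℓ+2} = L_ℓ + L_{ℓ+1}`. -/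
def lucas : ℕ → ℕ
  | 0 => 2
  | 1 => 1
  | ℓ + 2 => lucas ℓ + lucas (ℓ + 1)

lemma lucas_add_two (n : ℕ) : lucas (n + 2) = lucas n + lucas (n + 1) := rfl

/-- The doubling formulas, proved by a simultaneous induction with the Cassini-type identity. -/
lemma lucas_double (k : ℕ) :
    (lucas (2 * k) : ℤ) = lucas k ^ 2 - 2 * (-1) ^ k ∧
    (lucas (2 * k + 1) : ℤ) = lucas k * lucas (k + 1) - (-1) ^ k ∧
    (lucas (k + 1) : ℤ) ^ 2 - lucas k * lucas (k + 1) - lucas k ^ 2 = -5 * (-1) ^ k := by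
  induction k with
  | zero => simp [lucas]
  | succ k ih =>
    obtain ⟨h1, h2, h3⟩ := ih
    have e1 : lucas (2 * (k + 1)) = lucas (2 * k) + lucas (2 * k + 1) := rfl
    have e2 : lucas (2 * (k + 1) + 1) = lucas (2 * k + 1) + lucas (2 * (k + 1)) := rfl
    have e3 : lucas (k + 1 + 1) = lucas k + lucas (k + 1) := rfl
    rw [e2, e1, e3]
    push_cast
    rw [h1, h2, pow_succ (-1 : ℤ)]
    refine ⟨?_, ?_, ?_⟩ <;> linarith

lemma lucas_add_two_mul (k m : ℕ) :
    (lucas (m + 2 * k) : ℤ) + (-1) ^ k * lucas m = lucas (m + k) * lucas k := by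
  obtain ⟨h1, h2, -⟩ := lucas_double k
  induction m using Nat.twoStepInduction with
  | zero => simp only [zero_add, h1, lucas]; push_cast; ring
  | one => simp only [add_comm 1, h2, lucas]; push_cast; ring
  | more m ih1 ih2 =>
    have e1 : lucas (m + 2 + 2 * k) = lucas (m + 2 * k) + lucas (m + 1 + 2 * k) := by
      rw [show m + 2 + 2 * k = m + 2 * k + 2 by ring, lucas_add_two]; congr 2; ring
    have e2 : lucas (m + 2 + k) = lucas (m + k) + lucas (m + 1 + k) := by
      rw [show m + 2 + k = m + k + 2 by ring, lucas_add_two]; congr 2; ring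
    rw [e1, e2, lucas_add_two]
    push_cast
    linarith

lemma lucas_two_pow_mod_four (a : ℕ) : lucas (2 ^ (a + 1)) % 4 = 3 := by
  induction a with
  | zero => rfl
  | succ a ih =>
    have h := (lucas_double (2 ^ (a + 1))).1
    rw [← pow_succ', (by simp [Nat.even_pow] : Even (2 ^ (a + 1))).neg_one_pow] at h
    have h4 : (lucas (2 ^ (a + 1)) : ℤ) ^ 2 % 4 = 1 := by
      have : (lucas (2 ^ (a + 1)) : ℤ) % 4 = 3 := by omega
      rw [pow_two, Int.mul_emod, this]; rfl
    omega

/-- Shifting the index by `2q` an odd number of times changes the sign of `L_r` modulo `L_q`. -/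
lemma lucas_dvd_of_odd {q : ℕ} (hq : Even q) (r s : ℕ) :
    (lucas q : ℤ) ∣ lucas (r + 2 * q * (2 * s + 1)) + lucas r := by
  have step (m : ℕ) : (lucas q : ℤ) ∣ lucas (m + 2 * q) + lucas m := by
    have h := lucas_add_two_mul q m
    rw [hq.neg_one_pow, one_mul] at h
    exact h ▸ dvd_mul_left _ _
  induction s with
  | zero => simpa using step r
  | succ s ih =>
    have h1 := step (r + 2 * q * (2 * s + 1))
    have h2 := step (r + 2 * q * (2 * s + 1) + 2 * q)
    rw [show r + 2 * q * (2 * (s + 1) + 1) = r + 2 * q * (2 * s + 1) + 2 * q + 2 * q by ring]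
    have h3 := (dvd_sub h2 h1).add ih
    ring_nf at h3 ⊢
    exact h3

/-- A modulus `N ≡ 3 (mod 4)` coprime to `c` never divides `x² + c²`. -/
lemma not_dvd_sq_add_sq {N : ℕ} (hN : N % 4 = 3) {x c : ℤ} (hc : c.gcd N = 1) :
    ¬ (N : ℤ) ∣ x ^ 2 + c ^ 2 := by
  intro h
  have hmod : x ^ 2 % N = (-1 * c ^ 2) % N :=
    Int.emod_eq_emod_iff_emod_sub_eq_zero.2 (Int.emod_eq_zero_of_dvd (by simpa using h))
  have hJ : jacobiSym (x ^ 2) N = -1 := by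
    rw [jacobiSym.mod_left, hmod, ← jacobiSym.mod_left, jacobiSym.mul_left,
      jacobiSym.sq_one' hc, jacobiSym.at_neg_one (Nat.odd_iff.2 (by omega)),
      ZMod.χ₄_nat_three_mod_four hN, mul_one]
  rw [jacobiSym.pow_left] at hJ
  nlinarith [sq_nonneg (jacobiSym x N)]

/-- A Lucas number of even index is `L_m² ± 2`, which is not a square. -/
lemma lucas_even_ne_sq (m k : ℕ) : lucas (2 * m) ≠ k ^ 2 := by
  intro h
  have h1 := (lucas_double m).1
  rw [h] at h1
  push_cast at h1
  -- Squares are `0` or `1` modulo `4`, so two of them cannot differ by `2`.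
  have sq_mod (y : ℤ) : y ^ 2 % 4 = 0 ∨ y ^ 2 % 4 = 1 := by
    rcases Int.emod_two_eq_zero_or_one y with hy | hy
    · left; exact Int.emod_eq_zero_of_dvd (by
        simpa using pow_dvd_pow_of_dvd (Int.dvd_of_emod_eq_zero hy) 2)
    · right; exact Int.sq_mod_four_eq_one_of_odd (Int.odd_iff.2 hy)
  have := sq_mod k
  have := sq_mod (lucas m)
  rcases neg_one_pow_eq_or ℤ m with hs | hs <;> rw [hs] at h1 <;> omega

lemma lucas_add_four_mul_ne_sq {r c : ℕ} (hr : lucas r = c ^ 2) (hc : c = 1 ∨ c = 2)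
    {s : ℕ} (hs : s ≠ 0) (k : ℕ) : lucas (r + 4 * s) ≠ k ^ 2 := by
  intro h
  obtain ⟨a, t, ⟨u, rfl⟩, rfl⟩ := Nat.exists_eq_two_pow_mul_odd hs
  have hN := lucas_two_pow_mod_four a
  have hd := lucas_dvd_of_odd (q := 2 ^ (a + 1)) (by simp [Nat.even_pow]) r u
  rw [show r + 2 * 2 ^ (a + 1) * (2 * u + 1) = r + 4 * (2 ^ a * (2 * u + 1)) by ring, h, hr] at hd
  push_cast at hd
  refine not_dvd_sq_add_sq hN ?_ hd
  rw [Int.gcd_natCast_natCast]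
  rcases hc with rfl | rfl
  · simp
  · exact (Nat.coprime_two_left).2 (Nat.odd_iff.2 (by omega))

/-- Cohn: the only square Lucas numbers are `L₁ = 1` and `L₃ = 4`. -/
lemma eq_one_or_three_of_lucas_eq_sq {n k : ℕ} (h : lucas n = k ^ 2) : n = 1 ∨ n = 3 := by
  have hd := Nat.div_add_mod n 4
  have hlt := Nat.mod_lt n (by norm_num : 4 > 0)
  have heven : n % 2 ≠ 0 := fun h0 => lucas_even_ne_sq (n / 2) k (by
    rwa [Nat.mul_div_cancel' (Nat.dvd_of_mod_eq_zero h0)])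
  by_contra! hn
  rcases (by omega : n % 4 = 1 ∨ n % 4 = 3) with h4 | h4
  · refine lucas_add_four_mul_ne_sq (r := 1) (c := 1) rfl (.inl rfl) (s := n / 4) (by omega) k ?_
    rwa [show 1 + 4 * (n / 4) = n by omega]
  · refine lucas_add_four_mul_ne_sq (r := 3) (c := 2) rfl (.inr rfl) (s := n / 4) (by omega) k ?_
    rwa [show 3 + 4 * (n / 4) = n by omega]


/-- There do not exist `ℓ ≥ 2`, a sign `ε ∈ {1, -1}`, and positive integers `k, x, n`
with `L_{ℓ+ε} = k²`, `F_ℓ` an odd prime, `F_{ℓ-2ε} ≥ 2`, `gcd(k, F_{ℓ-2ε}) = 1` and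
`F_{ℓ-2ε}·x² + k² = (F_ℓ)ⁿ`. -/
theorem no_fibonacci_lucas_solution :
    ¬ ∃ (ℓ : ℕ) (ε : ℤ) (k x n j₁ j₂ : ℕ),
      2 ≤ ℓ ∧ (ε = 1 ∨ ε = -1) ∧ 0 < k ∧ 0 < x ∧ 0 < n ∧
      (j₁ : ℤ) = (ℓ : ℤ) + ε ∧ (j₂ : ℤ) = (ℓ : ℤ) - 2 * ε ∧
      lucas j₁ = k ^ 2 ∧
      (Nat.fib ℓ).Prime ∧ Odd (Nat.fib ℓ) ∧
      2 ≤ Nat.fib j₂ ∧ Nat.gcd k (Nat.fib j₂) = 1 ∧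
      Nat.fib j₂ * x ^ 2 + k ^ 2 = (Nat.fib ℓ) ^ n := by
  rintro ⟨ℓ, ε, k, x, n, j₁, j₂, -, hε, -, -, -, hj₁, hj₂, hL, hp, -, -, hg, -⟩
  -- `F_ℓ` prime excludes `ℓ = 0` and `ℓ = 2`, the other indices with `ℓ + ε ∈ {1, 3}`.
  have h2 : ℓ ≠ 2 := by rintro rfl; exact absurd hp (by norm_num)
  have h0 : ℓ ≠ 0 := by rintro rfl; exact absurd hp (by norm_num)
  obtain ⟨h4, hj⟩ : j₁ = 3 ∧ j₂ = 6 := by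
    rcases eq_one_or_three_of_lucas_eq_sq hL with h | h <;> rcases hε with h' | h' <;> omega
  subst h4 hj
  have hk : k = 2 := by
    have : k ^ 2 = 2 ^ 2 := hL.symm
    exact Nat.pow_left_injective two_ne_zero this
  subst hk
  exact absurd hg (by decide)
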